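/- arXiv:2501.18035 — 5 statements merged into one kernel-verified Lean document; each statement's English description precedes it below -/
import Mathlib

section
/- Let R₀ ∈ ℂ^{m×n} be in GB(s) form, let s + t ≤ n and b ≤ t, and let C ⊆ {s+1, …, s+t} be a set of b 'candidate' column indices. Let Π̂ ∈ ℂ^{n×n} be a permutation matrix whose underlying permutation fixes every index j with j ≤ s or j > s+t and maps the indices in C bijectively onto {s+1, …, s+b}. Let U ∈ ℂ^{(m−s)×(m−s)} be unitary and set Q̂ = blkdiag(I_s, U) ∈ ℂ^{m×m}, and R₁ = Q̂* R₀ Π̂. Suppose that for some 1 ≤ c ≤ min{m−s, b} the (m−s)×b submatrix R₁((s+1):m, (s+1):(s+b)) is in GB(c) form, and that |R₁(s+c, s+c)|² ≥ max(δ, μ), where δ := max{ ‖R₀((s+1):m, j)‖₂² : j ∈ {s+1,…,s+t} \ C } (with δ := 0 if C = {s+1,…,s+t}) and μ := max{ ‖R₀(:, j)‖₂² : s+t < j ≤ n } (with μ := 0 if s+t = n). Then R₁ is in GB(s+c) form. -/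
open Matrix

/-- `tailNorm R i j` is the Euclidean norm of the subvector of column `j` of `R`
consisting of the (0-based) rows `i, i+1, …, m-1`, i.e. `‖R((i+1):m, j)‖₂` in 1-based notation. -/
noncomputable def tailNorm {m n : ℕ} (R : Matrix (Fin m) (Fin n) ℂ) (i : ℕ) (j : Fin n) : ℝ :=
  Real.sqrt (∑ p : Fin m, if i ≤ p.val then ‖R p j‖ ^ 2 else 0)

/-- `R` is in `k`-Golub–Businger form: its first `k` columns are upper-triangular, and for each
(1-based) `i ≤ k`, `|R(i,i)|` equals the maximum of `‖R(i:m, j)‖₂` over the columns `j ≥ i`. -/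
def IsGB {m n : ℕ} (k : ℕ) (R : Matrix (Fin m) (Fin n) ℂ) : Prop :=
  (∀ (p : Fin m) (q : Fin n), q.val < k → q.val < p.val → R p q = 0) ∧
  ∀ (i : ℕ), i < k → ∀ (him : i < m) (hin : i < n),
    IsGreatest {x : ℝ | ∃ j : Fin n, i ≤ j.val ∧ x = tailNorm R i j}
      ‖R ⟨i, him⟩ ⟨i, hin⟩‖

/-- `blkdiag hsm U` is the block-diagonal `m×m` matrix with the `s×s` identity in the
upper-left block and `U ∈ ℂ^{(m−s)×(m−s)}` in the lower-right block. -/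
noncomputable def blkdiag {m s : ℕ} (hsm : s ≤ m)
    (U : Matrix (Fin (m - s)) (Fin (m - s)) ℂ) : Matrix (Fin m) (Fin m) ℂ :=
  Matrix.of fun i j =>
    if h : i.val < s ∨ j.val < s then (if i = j then (1 : ℂ) else 0)
    else U ⟨i.val - s, by have := i.isLt; omega⟩ ⟨j.val - s, by have := j.isLt; omega⟩

/-!
Requiring each pivot to dominate the tail of *its own* column already forces the entries below it
to vanish, so GB form is just a family of inequalities `‖R(i:m, j)‖ ≤ |R(i, i)|`, `j ≥ i`.
Left multiplication by `blkdiag(I_s, U)` keeps the first `s` rows and, `U` being unitary, the norms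
of the column tails starting at or above row `s`; hence the first `s` pivots stay dominant. For the
next `c` pivots, the block hypothesis settles the candidate columns. The remaining tails are at most
the last pivot by the commit condition, and pivots are non-increasing.
-/

section TailNorm

variable {m n : ℕ} (R : Matrix (Fin m) (Fin n) ℂ)

lemma tailNorm_nonneg (i : ℕ) (j : Fin n) : 0 ≤ tailNorm R i j :=
  Real.sqrt_nonneg _

lemma tailNorm_sq (i : ℕ) (j : Fin n) :
    tailNorm R i j ^ 2 = ∑ p : Fin m with i ≤ p.val, ‖R p j‖ ^ 2 := by
  rw [tailNorm, Finset.sum_filter, Real.sq_sqrt]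
  exact Finset.sum_nonneg fun p _ => by split_ifs <;> positivity

lemma tailNorm_submatrix_id {l : ℕ} (f : Fin l → Fin n) (i : ℕ) (j : Fin l) :
    tailNorm (R.submatrix id f) i j = tailNorm R i (f j) :=
  rfl

lemma tailNorm_anti {i k : ℕ} (hik : i ≤ k) (j : Fin n) :
    tailNorm R k j ≤ tailNorm R i j := by
  refine le_of_sq_le_sq ?_ (tailNorm_nonneg R i j)
  rw [tailNorm_sq, tailNorm_sq]
  refine Finset.sum_le_sum_of_subset_of_nonneg ?_ fun _ _ _ => by positivity
  exact Finset.monotone_filter_right _ fun _ _ hp => hik.trans hp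

lemma norm_le_tailNorm {i : ℕ} {p : Fin m} (hip : i ≤ p.val) (j : Fin n) :
    ‖R p j‖ ≤ tailNorm R i j := by
  refine le_of_sq_le_sq ?_ (tailNorm_nonneg R i j)
  rw [tailNorm_sq]
  exact Finset.single_le_sum (f := fun p => ‖R p j‖ ^ 2) (fun _ _ => by positivity) (by simpa)

variable {R}

lemma eq_zero_of_tailNorm_le_norm {p q : Fin m} {j : Fin n} (hpq : p < q)
    (h : tailNorm R p j ≤ ‖R p j‖) : R q j = 0 := by
  have hpair : ‖R p j‖ ^ 2 + ‖R q j‖ ^ 2 ≤ tailNorm R p j ^ 2 := by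
    rw [tailNorm_sq]
    exact Finset.add_le_sum (f := fun p => ‖R p j‖ ^ 2) (fun _ _ => by positivity) (by simp)
      (by simpa using hpq.le) hpq.ne
  have hsq : tailNorm R p j ^ 2 ≤ ‖R p j‖ ^ 2 := by gcongr; exact tailNorm_nonneg R p j
  have hq : ‖R q j‖ ^ 2 = 0 := le_antisymm (by linarith) (by positivity)
  simpa using hq

lemma tailNorm_congr {R' : Matrix (Fin m) (Fin n) ℂ} {i s : ℕ} (his : i ≤ s) {j : Fin n}
    (hrow : ∀ p : Fin m, p.val < s → R p j = R' p j) (htail : tailNorm R s j = tailNorm R' s j) :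
    tailNorm R i j = tailNorm R' i j := by
  have split (A : Matrix (Fin m) (Fin n) ℂ) : tailNorm A i j ^ 2 =
      ∑ p : Fin m with i ≤ p.val ∧ p.val < s, ‖A p j‖ ^ 2 + tailNorm A s j ^ 2 := by
    rw [tailNorm_sq, tailNorm_sq, ← Finset.sum_filter_add_sum_filter_not _ (fun p => p.val < s),
      Finset.filter_filter, Finset.filter_filter]
    congr 3
    ext p
    lia
  rw [← sq_eq_sq₀ (tailNorm_nonneg R i j) (tailNorm_nonneg R' i j), split, split, htail]
  congr 1
  refine Finset.sum_congr rfl fun p hp => ?_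
  rw [hrow p (Finset.mem_filter.mp hp).2.2]

lemma conjTranspose_mul_self_apply_eq_tailNorm_sq (j : Fin n) :
    (Rᴴ * R) j j = ((tailNorm R 0 j ^ 2 : ℝ) : ℂ) := by
  simp [tailNorm_sq, mul_apply, Complex.conj_mul']

lemma tailNorm_zero_unitary_mul {V : Matrix (Fin m) (Fin m) ℂ} (hV : V ∈ unitaryGroup (Fin m) ℂ)
    (R : Matrix (Fin m) (Fin n) ℂ) (j : Fin n) : tailNorm (V * R) 0 j = tailNorm R 0 j := by
  have hgram : (V * R)ᴴ * (V * R) = Rᴴ * R := by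
    rw [conjTranspose_mul, Matrix.mul_assoc, ← Matrix.mul_assoc Vᴴ, ← star_eq_conjTranspose V,
      mem_unitaryGroup_iff'.mp hV, Matrix.one_mul]
  rw [← sq_eq_sq₀ (tailNorm_nonneg _ 0 j) (tailNorm_nonneg R 0 j), ← Complex.ofReal_inj,
    ← conjTranspose_mul_self_apply_eq_tailNorm_sq, hgram,
    conjTranspose_mul_self_apply_eq_tailNorm_sq]

end TailNorm

section LowerRows

/-- The index shift `p ↦ s + p`, embedding the indices of a trailing block into those of the whole
matrix. -/
def shiftIndex {s d m : ℕ} (h : s + d ≤ m) (p : Fin d) : Fin m :=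
  ⟨s + p.val, by lia⟩

/-- The submatrix `R((s+1):m, :)` on which the lower block of `blkdiag hsm U` acts. -/
def lowerRows {m n s : ℕ} (hsm : s ≤ m) (R : Matrix (Fin m) (Fin n) ℂ) :
    Matrix (Fin (m - s)) (Fin n) ℂ :=
  R.submatrix (shiftIndex (Nat.add_sub_of_le hsm).le) id

/-- The submatrix `R((s+1):m, (s+1):(s+b))`, in which the pivots after the first `s` are chosen. -/
def trailingBlock {m n s b : ℕ} (hsm : s ≤ m) (hbn : s + b ≤ n) (R : Matrix (Fin m) (Fin n) ℂ) :
    Matrix (Fin (m - s)) (Fin b) ℂ :=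
  (lowerRows hsm R).submatrix id (shiftIndex hbn)

lemma sum_eq_sum_castLE_add_sum_shiftIndex {M : Type*} [AddCommMonoid M] {s d m : ℕ}
    (h : s + d = m) (f : Fin m → M) :
    ∑ p, f p = ∑ p : Fin s, f (p.castLE (by lia)) + ∑ p : Fin d, f (shiftIndex h.le p) := by
  subst h
  exact Fin.sum_univ_add f

variable {m n s : ℕ} (hsm : s ≤ m)

lemma tailNorm_lowerRows (R : Matrix (Fin m) (Fin n) ℂ) (i : ℕ) (j : Fin n) :
    tailNorm (lowerRows hsm R) i j = tailNorm R (s + i) j := by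
  have hhead (p : Fin s) : ¬ s + i ≤ p.val := by lia
  simp [tailNorm, sum_eq_sum_castLE_add_sum_shiftIndex (Nat.add_sub_of_le hsm), hhead, lowerRows,
    shiftIndex]

lemma tailNorm_trailingBlock {b : ℕ} (hbn : s + b ≤ n) (R : Matrix (Fin m) (Fin n) ℂ) (i : ℕ)
    (j : Fin b) :
    tailNorm (trailingBlock hsm hbn R) i j = tailNorm R (s + i) (shiftIndex hbn j) := by
  rw [trailingBlock, tailNorm_submatrix_id, tailNorm_lowerRows]

lemma conjTranspose_blkdiag (U : Matrix (Fin (m - s)) (Fin (m - s)) ℂ) :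
    (blkdiag hsm U)ᴴ = blkdiag hsm Uᴴ := by
  ext p q
  by_cases h : p.val < s ∨ q.val < s
  · simp [blkdiag, h, h.symm, eq_comm, apply_ite]
  · simp [blkdiag, h, mt Or.symm h]

variable (V : Matrix (Fin (m - s)) (Fin (m - s)) ℂ) (R : Matrix (Fin m) (Fin n) ℂ)

lemma blkdiag_mul_apply_of_lt {p : Fin m} (hp : p.val < s) (q : Fin n) :
    (blkdiag hsm V * R) p q = R p q := by
  simp [mul_apply, blkdiag, hp]

lemma lowerRows_blkdiag_mul : lowerRows hsm (blkdiag hsm V * R) = V * lowerRows hsm R := by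
  ext p q
  have hhead (x : Fin s) : s + p.val ≠ x.val := by lia
  simp [lowerRows, mul_apply, sum_eq_sum_castLE_add_sum_shiftIndex (Nat.add_sub_of_le hsm),
    blkdiag, shiftIndex, Fin.ext_iff, hhead]

variable {V}

lemma tailNorm_blkdiag_mul (hV : V ∈ unitaryGroup (Fin (m - s)) ℂ) {i : ℕ} (his : i ≤ s)
    (j : Fin n) : tailNorm (blkdiag hsm V * R) i j = tailNorm R i j := by
  refine tailNorm_congr his (fun p hp => blkdiag_mul_apply_of_lt hsm V R hp j) ?_
  have hlower := tailNorm_zero_unitary_mul hV (lowerRows hsm R) j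
  rwa [← lowerRows_blkdiag_mul, tailNorm_lowerRows, tailNorm_lowerRows] at hlower

end LowerRows

section GolubBusinger

variable {m n k : ℕ} {R : Matrix (Fin m) (Fin n) ℂ}

lemma isGB_iff_tailNorm_le : IsGB k R ↔ ∀ i < k, ∀ (him : i < m) (hin : i < n) (j : Fin n),
    i ≤ j.val → tailNorm R i j ≤ ‖R ⟨i, him⟩ ⟨i, hin⟩‖ := by
  constructor
  · intro h i hik him hin j hij
    exact (h.2 i hik him hin).2 ⟨j, hij, rfl⟩
  · refine fun h => ⟨fun p q hqk hqp => ?_, fun i hik him hin => ⟨⟨⟨i, hin⟩, le_rfl, ?_⟩, ?_⟩⟩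
    · have hqm : q.val < m := hqp.trans p.isLt
      exact eq_zero_of_tailNorm_le_norm (p := ⟨q, hqm⟩) hqp (h q hqk hqm q.isLt q le_rfl)
    · exact le_antisymm (norm_le_tailNorm R (p := ⟨i, him⟩) le_rfl _) (h i hik him hin _ le_rfl)
    · rintro _ ⟨j, hij, rfl⟩
      exact h i hik him hin j hij

lemma IsGB.tailNorm_le (h : IsGB k R) {i : ℕ} (hik : i < k) (him : i < m) (hin : i < n)
    {j : Fin n} (hij : i ≤ j.val) : tailNorm R i j ≤ ‖R ⟨i, him⟩ ⟨i, hin⟩‖ :=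
  isGB_iff_tailNorm_le.mp h i hik him hin j hij

lemma IsGB.norm_pivot_le_norm_pivot (h : IsGB k R) {i l : ℕ} (hil : i ≤ l) (hik : i < k)
    (hlm : l < m) (hln : l < n) :
    ‖R ⟨l, hlm⟩ ⟨l, hln⟩‖ ≤ ‖R ⟨i, hil.trans_lt hlm⟩ ⟨i, hil.trans_lt hln⟩‖ :=
  (norm_le_tailNorm R hil _).trans (h.tailNorm_le hik _ _ hil)

lemma IsGB.blkdiag_mul (h : IsGB k R) {s : ℕ} (hks : k ≤ s) (hsm : s ≤ m)
    {V : Matrix (Fin (m - s)) (Fin (m - s)) ℂ} (hV : V ∈ unitaryGroup (Fin (m - s)) ℂ) :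
    IsGB k (blkdiag hsm V * R) := by
  refine isGB_iff_tailNorm_le.mpr fun i hik him hin j hij => ?_
  have his : i < s := hik.trans_le hks
  rw [tailNorm_blkdiag_mul hsm R hV his.le, blkdiag_mul_apply_of_lt hsm V R his]
  exact h.tailNorm_le hik him hin hij

lemma IsGB.submatrix_perm (h : IsGB k R) {τ : Equiv.Perm (Fin n)}
    (hτ : ∀ j : Fin n, j.val < k → τ j = j) : IsGB k (R.submatrix id τ) := by
  refine isGB_iff_tailNorm_le.mpr fun i hik him hin j hij => ?_
  have hτj : i ≤ (τ j).val := by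
    by_contra! hlt
    have hfixed : τ j = j := τ.injective (hτ _ (hlt.trans hik))
    lia
  rw [tailNorm_submatrix_id, submatrix_apply, hτ ⟨i, hin⟩ hik]
  exact h.tailNorm_le hik him hin hτj

lemma IsGB.add {s c : ℕ} (hsm : s ≤ m) (hsn : s ≤ n) (hs : IsGB s R)
    (hc : IsGB c (trailingBlock hsm (Nat.add_sub_of_le hsn).le R)) : IsGB (s + c) R := by
  refine isGB_iff_tailNorm_le.mpr fun i hi him hin j hij => ?_
  obtain his | ⟨l, rfl⟩ := (lt_or_ge i s).imp_right Nat.exists_eq_add_of_le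
  · exact hs.tailNorm_le his him hin hij
  · have hj : shiftIndex (Nat.add_sub_of_le hsn).le ⟨j.val - s, by lia⟩ = j :=
      Fin.ext (Nat.add_sub_of_le (by lia))
    have hblock := hc.tailNorm_le (i := l) (j := ⟨j.val - s, by lia⟩) (by lia) (by lia) (by lia)
      (Nat.le_sub_of_add_le' hij)
    rwa [tailNorm_trailingBlock, hj] at hblock

lemma IsGB.of_leading_columns {b c : ℕ} (hbn : b ≤ n) (hcm : c < m) (hcb : c < b)
    (hlead : IsGB (c + 1) (R.submatrix id (Fin.castLE hbn)))
    (hrest : ∀ j : Fin n, b ≤ j.val → tailNorm R 0 j ≤ ‖R ⟨c, hcm⟩ ⟨c, hcb.trans_le hbn⟩‖) :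
    IsGB (c + 1) R := by
  refine isGB_iff_tailNorm_le.mpr fun i hi him hin j hij => ?_
  have hib : i < b := by lia
  obtain hjb | hbj := lt_or_ge j.val b
  · exact hlead.tailNorm_le (j := ⟨j, hjb⟩) hi him hib hij
  · calc tailNorm R i j ≤ tailNorm R 0 j := tailNorm_anti R (Nat.zero_le i) j
      _ ≤ ‖R ⟨c, hcm⟩ ⟨c, hcb.trans_le hbn⟩‖ := hrest j hbj
      _ ≤ ‖R ⟨i, him⟩ ⟨i, hin⟩‖ :=
        hlead.norm_pivot_le_norm_pivot (Nat.le_of_lt_succ hi) hi hcm hcb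

end GolubBusinger

/-- **commit rule, Lemma 3.1.** Let `R₀ ∈ ℂ^{m×n}` be in GB(s) form, let
`s + t ≤ n`, `b ≤ t`, and let `C` be a set of `b` candidate column indices inside the tracked
range `{s+1,…,s+t}` (0-based: `s ≤ j < s+t`). Let `σ` be a permutation fixing every index outside
the tracked range and mapping `C` bijectively onto `{s+1,…,s+b}` (0-based: `s ≤ j < s+b`), with
permutation matrix `σ.permMatrix ℂ`. Let `U` be unitary, `Q̂ = blkdiag(I_s, U)`, and
`R₁ = Q̂ᴴ R₀ Π̂`. Suppose for some `1 ≤ c ≤ min{m−s, b}` that the submatrix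
`R₁((s+1):m, (s+1):(s+b))` is in GB(c) form and that `|R₁(s+c, s+c)|² ≥ max(δ, μ)`, where
`δ` is the maximal squared residual norm `‖R₀((s+1):m, j)‖₂²` over non-candidate tracked
columns `j`, and `μ` is the maximal squared column norm `‖R₀(:, j)‖₂²` over untracked columns
`j > s+t` (each `0` if the respective set is empty). Then `R₁` is in GB(s+c) form. -/
theorem commit_rule {m n s t b c : ℕ} (hsm : s ≤ m) (hst : s + t ≤ n) (hbt : b ≤ t)
    (hc1 : 1 ≤ c) (hcm : c ≤ m - s) (hcb : c ≤ b)
    (R₀ : Matrix (Fin m) (Fin n) ℂ) (hGB : IsGB s R₀)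
    (C : Finset (Fin n)) (hCcard : C.card = b)
    (hCsub : ∀ j ∈ C, s ≤ j.val ∧ j.val < s + t)
    (σ : Equiv.Perm (Fin n))
    (hfix : ∀ j : Fin n, (j.val < s ∨ s + t ≤ j.val) → σ j = j)
    (hmap : C.image σ = Finset.univ.filter fun j : Fin n => s ≤ j.val ∧ j.val < s + b)
    (U : Matrix (Fin (m - s)) (Fin (m - s)) ℂ)
    (hU : U ∈ Matrix.unitaryGroup (Fin (m - s)) ℂ)
    (R₁ : Matrix (Fin m) (Fin n) ℂ)
    (hR₁ : R₁ = (blkdiag hsm U)ᴴ * R₀ * σ.permMatrix ℂ)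
    (hsub : IsGB c (Matrix.of fun (p : Fin (m - s)) (q : Fin b) =>
        R₁ ⟨s + p.val, by have := p.isLt; omega⟩ ⟨s + q.val, by have := q.isLt; omega⟩))
    (hδ : ∀ j : Fin n, s ≤ j.val → j.val < s + t → j ∉ C →
        (tailNorm R₀ s j) ^ 2 ≤
          ‖R₁ ⟨s + c - 1, by omega⟩ ⟨s + c - 1, by omega⟩‖ ^ 2)
    (hμ : ∀ j : Fin n, s + t ≤ j.val →
        (tailNorm R₀ 0 j) ^ 2 ≤
          ‖R₁ ⟨s + c - 1, by omega⟩ ⟨s + c - 1, by omega⟩‖ ^ 2) :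
    IsGB (s + c) R₁ := by
  obtain ⟨d, rfl⟩ := Nat.exists_eq_add_of_le' hc1
  have hV : Uᴴ ∈ unitaryGroup (Fin (m - s)) ℂ := Unitary.star_mem hU
  rw [conjTranspose_blkdiag, Equiv.Perm.permMatrix, PEquiv.mul_toMatrix_toPEquiv] at hR₁
  have htail (k : Fin n) : tailNorm R₁ s (σ k) = tailNorm R₀ s k := by
    rw [hR₁, tailNorm_submatrix_id, Equiv.symm_apply_apply, tailNorm_blkdiag_mul hsm R₀ hV le_rfl]
  have hGB₁ : IsGB s R₁ :=
    hR₁ ▸ (hGB.blkdiag_mul le_rfl hsm hV).submatrix_perm fun j hj =>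
      σ.symm_apply_eq.mpr (hfix j (Or.inl hj)).symm
  refine hGB₁.add hsm (by lia) (.of_leading_columns (b := b) (by lia) hcm hcb hsub fun j hbj => ?_)
  obtain ⟨k, hk⟩ := σ.surjective (shiftIndex (Nat.add_sub_of_le (by lia)).le j)
  have hσk : s + b ≤ (σ k).val := hk ▸ Nat.add_le_add_left hbj s
  rw [tailNorm_trailingBlock, ← hk, add_zero, htail]
  refine le_of_sq_le_sq ?_ (norm_nonneg _)
  obtain hkt | hkt := lt_or_ge k.val (s + t)
  · have hsk : s ≤ k.val := by
      by_contra! hks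
      have hfixed : σ k = k := hfix k (Or.inl hks)
      lia
    refine hδ k hsk hkt fun hkC => ?_
    have hmem := hmap ▸ Finset.mem_image_of_mem σ hkC
    simp only [Finset.mem_filter] at hmem
    lia
  · exact (pow_le_pow_left₀ (tailNorm_nonneg R₀ s k)
      (tailNorm_anti R₀ (Nat.zero_le s) k) 2).trans (hμ k hkt)
end

section
/- Let V₁ ∈ ℂ^{m×s}, T₁ ∈ ℂ^{s×s}, V̂ ∈ ℂ^{m×c}, T̂ ∈ ℂ^{c×c}, and let V₂ = [V₁ V̂] ∈ ℂ^{m×(s+c)} be the horizontal concatenation. Then (I − V₁T₁V₁*)(I − V̂T̂V̂*) = I − V₂T₂V₂*, where T₂ ∈ ℂ^{(s+c)×(s+c)} is the block matrix with blocks T₂ = [[T₁, −T₁V₁*V̂T̂], [0, T̂]]. -/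
open Matrix

section

variable {m k₁ k₂ l₁ l₂ n R : Type*} [Fintype k₁] [Fintype k₂] [Fintype l₁] [Fintype l₂]

theorem fromCols_mul_fromBlocks_mul_fromRows [Semiring R]
    (U₁ : Matrix m k₁ R) (U₂ : Matrix m k₂ R)
    (A : Matrix k₁ l₁ R) (B : Matrix k₁ l₂ R) (C : Matrix k₂ l₁ R) (D : Matrix k₂ l₂ R)
    (W₁ : Matrix l₁ n R) (W₂ : Matrix l₂ n R) :
    fromCols U₁ U₂ * fromBlocks A B C D * fromRows W₁ W₂ =
      U₁ * A * W₁ + U₂ * C * W₁ + (U₁ * B * W₂ + U₂ * D * W₂) := by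
  rw [fromCols_mul_fromBlocks, fromCols_mul_fromRows, Matrix.add_mul, Matrix.add_mul]

theorem wy_product_identity_general [Fintype m] [DecidableEq m] [Ring R]
    (U₁ : Matrix m k₁ R) (T₁ : Matrix k₁ l₁ R) (W₁ : Matrix l₁ m R)
    (U₂ : Matrix m k₂ R) (T₂ : Matrix k₂ l₂ R) (W₂ : Matrix l₂ m R) :
    (1 - U₁ * T₁ * W₁) * (1 - U₂ * T₂ * W₂) =
      1 - fromCols U₁ U₂ * fromBlocks T₁ (-(T₁ * W₁ * U₂ * T₂)) 0 T₂ * fromRows W₁ W₂ := by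
  have cross_term : U₁ * (-(T₁ * W₁ * U₂ * T₂)) * W₂ = -(U₁ * T₁ * W₁ * (U₂ * T₂ * W₂)) := by
    simp only [Matrix.mul_neg, Matrix.neg_mul, Matrix.mul_assoc]
  rw [fromCols_mul_fromBlocks_mul_fromRows, cross_term, Matrix.mul_zero, Matrix.zero_mul]
  noncomm_ring

end

/-- **WY product identity.** For arbitrary `V₁ ∈ ℂ^{m×s}`, `T₁ ∈ ℂ^{s×s}`,
`V̂ ∈ ℂ^{m×c}`, `T̂ ∈ ℂ^{c×c}`, with `V₂ = [V₁ V̂]` the horizontal concatenation,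
`(I − V₁T₁V₁ᴴ)(I − V̂T̂V̂ᴴ) = I − V₂T₂V₂ᴴ` where `T₂ = [[T₁, −T₁V₁ᴴV̂T̂], [0, T̂]]`. -/
theorem wy_product_identity {m s c : ℕ}
    (V₁ : Matrix (Fin m) (Fin s) ℂ) (T₁ : Matrix (Fin s) (Fin s) ℂ)
    (Vh : Matrix (Fin m) (Fin c) ℂ) (Th : Matrix (Fin c) (Fin c) ℂ) :
    (1 - V₁ * T₁ * V₁ᴴ) * (1 - Vh * Th * Vhᴴ) =
      1 - (fromCols V₁ Vh) *
        (fromBlocks T₁ (-(T₁ * V₁ᴴ * Vh * Th)) 0 Th) *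
        (fromCols V₁ Vh)ᴴ := by
  rw [conjTranspose_fromCols_eq_fromRows_conjTranspose]
  exact wy_product_identity_general V₁ T₁ V₁ᴴ Vh Th Vhᴴ
end

section
/- Let V₁ ∈ ℂ^{m×s}, T₁ ∈ ℂ^{s×s}, V̂ ∈ ℂ^{m×c}, T̂ ∈ ℂ^{c×c}, and suppose the horizontal concatenation V₂ = [V₁ V̂] ∈ ℂ^{m×(s+c)} has linearly independent columns. If T₂ ∈ ℂ^{(s+c)×(s+c)} satisfies I − V₂T₂V₂* = (I − V₁T₁V₁*)(I − V̂T̂V̂*), then T₂ is the block matrix [[T₁, −T₁V₁*V̂T̂], [0, T̂]]. -/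
open Matrix

section Cancellation

variable {l m n k R : Type*} [Fintype m] [Fintype n]

theorem mul_mul_injective [NonUnitalNonAssocSemiring R] {V : Matrix l m R} {W : Matrix n k R}
    (hV : Function.Injective V.mulVec) (hW : Function.Injective W.vecMul) :
    Function.Injective fun T : Matrix m n R ↦ V * T * W := by
  intro T T' h
  have hVT : V * T = V * T' := ext_row fun i ↦ hW congr(($h).row i)
  exact ext_col fun j ↦ hV congr(($hVT).col j)

theorem vecMul_conjTranspose_injective [NonUnitalSemiring R] [StarRing R] {V : Matrix l m R}
    (hV : Function.Injective V.mulVec) : Function.Injective Vᴴ.vecMul := by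
  intro x y h
  simp only [vecMul_conjTranspose] at h
  exact star_injective (hV (star_injective h))

end Cancellation

section WYUpdate

variable {m s s' c c' R : Type*} [Fintype m] [DecidableEq m] [Fintype s] [Fintype s'] [Fintype c]
  [Fintype c'] [Ring R]

theorem one_sub_fromCols_mul_fromBlocks_mul_fromRows
    (V₁ : Matrix m s R) (T₁ : Matrix s s' R) (W₁ : Matrix s' m R)
    (Vh : Matrix m c R) (Th : Matrix c c' R) (Wh : Matrix c' m R) :
    1 - fromCols V₁ Vh * fromBlocks T₁ (-(T₁ * W₁ * Vh * Th)) 0 Th * fromRows W₁ Wh =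
      (1 - V₁ * T₁ * W₁) * (1 - Vh * Th * Wh) := by
  have expand : fromCols V₁ Vh * fromBlocks T₁ (-(T₁ * W₁ * Vh * Th)) 0 Th * fromRows W₁ Wh =
      V₁ * T₁ * W₁ + (Vh * Th * Wh - V₁ * T₁ * W₁ * (Vh * Th * Wh)) := by
    rw [fromCols_mul_fromBlocks, fromCols_mul_fromRows]
    simp only [Matrix.mul_zero, add_zero, Matrix.mul_neg, neg_add_eq_sub,
      Matrix.sub_mul, Matrix.mul_assoc]
  rw [expand]
  noncomm_ring

theorem wy_update_unique_general
    {V₁ : Matrix m s R} {T₁ : Matrix s s' R} {W₁ : Matrix s' m R}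
    {Vh : Matrix m c R} {Th : Matrix c c' R} {Wh : Matrix c' m R}
    (hV : Function.Injective (fromCols V₁ Vh).mulVec)
    (hW : Function.Injective (fromRows W₁ Wh).vecMul) {T₂ : Matrix (s ⊕ c) (s' ⊕ c') R} :
    1 - fromCols V₁ Vh * T₂ * fromRows W₁ Wh = (1 - V₁ * T₁ * W₁) * (1 - Vh * Th * Wh) ↔
      T₂ = fromBlocks T₁ (-(T₁ * W₁ * Vh * Th)) 0 Th := by
  rw [← one_sub_fromCols_mul_fromBlocks_mul_fromRows, sub_right_inj]
  exact (mul_mul_injective hV hW).eq_iff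

end WYUpdate

/-- **Lemma B.1.** If `V₂ = [V₁ V̂]` has linearly independent columns (the map
`x ↦ V₂ x` is injective) and `T₂` satisfies `I − V₂T₂V₂ᴴ = (I − V₁T₁V₁ᴴ)(I − V̂T̂V̂ᴴ)`, then
`T₂` is the block matrix `[[T₁, −T₁V₁ᴴV̂T̂], [0, T̂]]`. -/
theorem wy_update_unique {m s c : ℕ}
    (V₁ : Matrix (Fin m) (Fin s) ℂ) (T₁ : Matrix (Fin s) (Fin s) ℂ)
    (Vh : Matrix (Fin m) (Fin c) ℂ) (Th : Matrix (Fin c) (Fin c) ℂ)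
    (hInj : Function.Injective (fromCols V₁ Vh).mulVec)
    (T₂ : Matrix (Fin s ⊕ Fin c) (Fin s ⊕ Fin c) ℂ)
    (hT₂ : 1 - (fromCols V₁ Vh) * T₂ * (fromCols V₁ Vh)ᴴ =
      (1 - V₁ * T₁ * V₁ᴴ) * (1 - Vh * Th * Vhᴴ)) :
    T₂ = fromBlocks T₁ (-(T₁ * V₁ᴴ * Vh * Th)) 0 Th := by
  have hInjStar := vecMul_conjTranspose_injective hInj
  rw [conjTranspose_fromCols_eq_fromRows_conjTranspose] at hT₂ hInjStar
  exact (wy_update_unique_general hInj hInjStar).1 hT₂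
end

section
/- Let v₁, …, v_k ∈ ℂ^m and τ₁, …, τ_k ∈ ℂ, and let V = [v₁ ⋯ v_k] ∈ ℂ^{m×k}. Then there exists an upper-triangular matrix T ∈ ℂ^{k×k} such that ∏_{i=1}^{k} (I − τᵢ vᵢ vᵢ*) = I − V T V*, where the product is ordered left to right (i.e., (I − τ₁v₁v₁*)(I − τ₂v₂v₂*)⋯(I − τ_k v_k v_k*)). -/
open Matrix

/-!
Factors in the form `1 - V T W` with `T` upper triangular multiply by concatenating the columns of
`V`, concatenating the rows of `W`, and joining the two middle factors by a coupling block,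
`[[T₁, -T₁ W₁ V₂ T₂], [0, T₂]]`, which is again upper triangular. A single factor `1 - v τ w` has
this form with a `1 × 1` middle factor, so the ordered product is handled one factor at a time.
-/

section BlockProduct

variable {m n ι κ α R : Type*}

theorem blockTriangular_fromBlocks [Preorder α] [Zero R] {b : ι ⊕ κ → α}
    {A : Matrix ι ι R} {D : Matrix κ κ R} (hA : A.BlockTriangular (b ∘ Sum.inl))
    (hD : D.BlockTriangular (b ∘ Sum.inr)) (hb : ∀ i j, b (Sum.inl i) ≤ b (Sum.inr j))
    (B : Matrix ι κ R) : (fromBlocks A B 0 D).BlockTriangular b := by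
  rintro (i | i) (j | j) hji
  · exact hA hji
  · exact absurd hji (hb i j).not_gt
  · rfl
  · exact hD hji

theorem isUpperTriangular_reindex_fromBlocks [Zero R] {k l : ℕ}
    {A : Matrix (Fin k) (Fin k) R} {D : Matrix (Fin l) (Fin l) R} (hA : A.IsUpperTriangular)
    (hD : D.IsUpperTriangular) (B : Matrix (Fin k) (Fin l) R) :
    (reindex finSumFinEquiv finSumFinEquiv (fromBlocks A B 0 D)).IsUpperTriangular := by
  refine blockTriangular_reindex_iff.mpr (blockTriangular_fromBlocks ?_ ?_ ?_ B)
  · exact fun i j hji => hA ((Fin.strictMono_castAdd l).lt_iff_lt.mp hji)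
  · exact fun i j hji => hD ((Fin.strictMono_natAdd k).lt_iff_lt.mp hji)
  · exact fun i j => i.is_lt.le.trans (Nat.le_add_right k j)

theorem one_sub_mul_one_sub_eq_one_sub_fromBlocks [Ring R] [Fintype m] [DecidableEq m]
    [Fintype ι] [Fintype κ] (V₁ : Matrix m ι R) (T₁ : Matrix ι ι R) (W₁ : Matrix ι m R)
    (V₂ : Matrix m κ R) (T₂ : Matrix κ κ R) (W₂ : Matrix κ m R) :
    (1 - V₁ * T₁ * W₁) * (1 - V₂ * T₂ * W₂) =
      1 - fromCols V₁ V₂ * fromBlocks T₁ (-(T₁ * W₁ * V₂ * T₂)) 0 T₂ * fromRows W₁ W₂ := by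
  simp only [fromCols_mul_fromBlocks, fromCols_mul_fromRows, Matrix.mul_zero, add_zero,
    Matrix.mul_neg, Matrix.add_mul, Matrix.neg_mul, sub_mul, mul_sub, one_mul, mul_one,
    Matrix.mul_assoc]
  abel

theorem mul_reindex_mul [NonUnitalNonAssocSemiring R] [Fintype ι] [Fintype κ] (e : ι ≃ κ)
    (V : Matrix m κ R) (T : Matrix ι ι R) (W : Matrix κ n R) :
    V * reindex e e T * W = V.submatrix id e * T * W.submatrix e id := by
  have hT : T = (reindex e e T).submatrix e e := by simp
  conv_rhs => rw [hT, submatrix_mul_equiv, submatrix_mul_equiv, submatrix_id_id]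

end BlockProduct

/-- `M` has a compact WY form with outer factors `V` and `W`: `M = 1 - V * T * W` for some
upper-triangular `T`. The form of the literature is the case `W = Vᴴ`; keeping `W` independent
of `V` removes the need for a star structure on the scalars. -/
def HasCompactWYForm {m ι R : Type*} [DecidableEq m] [Fintype ι] [LT ι] [Ring R]
    (M : Matrix m m R) (V : Matrix m ι R) (W : Matrix ι m R) : Prop :=
  ∃ T : Matrix ι ι R, T.IsUpperTriangular ∧ M = 1 - V * T * W

namespace HasCompactWYForm

variable {m ι R : Type*} [DecidableEq m] [Ring R]

theorem one [Fintype ι] [LT ι] (V : Matrix m ι R) (W : Matrix ι m R) :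
    HasCompactWYForm 1 V W :=
  ⟨0, blockTriangular_zero, by simp⟩

theorem one_sub_vecMulVec_smul [Unique ι] [Fintype ι] [Preorder ι] (V : Matrix m ι R)
    (W : Matrix ι m R) (τ : R) :
    HasCompactWYForm (1 - vecMulVec (V.col default) (τ • W.row default)) V W := by
  refine ⟨diagonal fun _ => τ, blockTriangular_diagonal _, ?_⟩
  ext p q
  simp [Matrix.mul_apply, vecMulVec_apply, mul_assoc]

theorem mul [Fintype m] {k l : ℕ} {M N : Matrix m m R} {V : Matrix m (Fin (k + l)) R}
    {W : Matrix (Fin (k + l)) m R}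
    (hM : HasCompactWYForm M (V.submatrix id (Fin.castAdd l)) (W.submatrix (Fin.castAdd l) id))
    (hN : HasCompactWYForm N (V.submatrix id (Fin.natAdd k)) (W.submatrix (Fin.natAdd k) id)) :
    HasCompactWYForm (M * N) V W := by
  obtain ⟨T₁, hT₁, rfl⟩ := hM
  obtain ⟨T₂, hT₂, rfl⟩ := hN
  let e : Fin k ⊕ Fin l ≃ Fin (k + l) := finSumFinEquiv
  have hV : fromCols (V.submatrix id (Fin.castAdd l)) (V.submatrix id (Fin.natAdd k)) =
      V.submatrix id e := fromCols_toCols (V.submatrix id e)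
  have hW : fromRows (W.submatrix (Fin.castAdd l) id) (W.submatrix (Fin.natAdd k) id) =
      W.submatrix e id := fromRows_toRows (W.submatrix e id)
  rw [one_sub_mul_one_sub_eq_one_sub_fromBlocks, hV, hW, ← mul_reindex_mul]
  exact ⟨_, isUpperTriangular_reindex_fromBlocks hT₁ hT₂ _, rfl⟩

end HasCompactWYForm

-- The scalar sits between the two vectors because `R` may be noncommutative.
theorem compact_wy_exists_general {m R : Type*} [Fintype m] [DecidableEq m] [Ring R] {k : ℕ}
    (v w : Fin k → m → R) (τ : Fin k → R) :
    HasCompactWYForm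
      ((List.finRange k).map fun i => 1 - vecMulVec (v i) (τ i • w i)).prod (of v)ᵀ (of w) := by
  induction k with
  | zero => exact .one _ _
  | succ k ih =>
    rw [List.finRange_succ_last, List.map_append, List.prod_append, List.map_map,
      List.map_singleton, List.prod_singleton]
    exact .mul (ih (v ∘ Fin.castSucc) (w ∘ Fin.castSucc) (τ ∘ Fin.castSucc))
      (.one_sub_vecMulVec_smul ((of v)ᵀ.submatrix id (Fin.natAdd k))
        ((of w).submatrix (Fin.natAdd k) id) (τ (Fin.last k)))

/-- **Schreiber–Van Loan, existence of a compact WY form.** For vectors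
`v₁, …, v_k ∈ ℂ^m` and scalars `τ₁, …, τ_k ∈ ℂ`, with `V = [v₁ ⋯ v_k]`, there is an
upper-triangular `T ∈ ℂ^{k×k}` such that the left-to-right ordered product
`∏_{i=1}^k (I − τᵢ vᵢ vᵢᴴ)` equals `I − V T Vᴴ`. -/
theorem compact_wy_exists {m k : ℕ} (v : Fin k → Fin m → ℂ) (τ : Fin k → ℂ) :
    ∃ T : Matrix (Fin k) (Fin k) ℂ,
      (∀ i j : Fin k, j < i → T i j = 0) ∧
      ((List.finRange k).map (fun i =>
          (1 : Matrix (Fin m) (Fin m) ℂ) - τ i • Matrix.vecMulVec (v i) (star (v i)))).prod =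
        1 - (Matrix.of fun (p : Fin m) (i : Fin k) => v i p) * T *
          (Matrix.of fun (p : Fin m) (i : Fin k) => v i p)ᴴ := by
  simp only [← vecMulVec_smul]
  exact compact_wy_exists_general v (fun i => star (v i)) τ
end

section
/- Let A ∈ ℂ^{m×n}, let Q ∈ ℂ^{m×m} be unitary, and set R = Q*A. Fix 1 ≤ i ≤ m, and suppose the first i−1 columns of R are upper-triangular with nonzero diagonal entries, i.e., R(p,q) = 0 for all q < i and p > q, and R(r,r) ≠ 0 for all r < i. Then for every 1 ≤ j ≤ n, the Euclidean norm of the orthogonal projection of A(:,j) onto the orthogonal complement of span{A(:,1), …, A(:,i−1)} equals ‖R(i:m, j)‖₂. -/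
open Matrix

/-- `colE A j` is column `j` of `A`, viewed as a vector in the Euclidean space `ℂ^m`
(with the standard Hermitian inner product). -/
noncomputable def colE {m n : ℕ} (A : Matrix (Fin m) (Fin n) ℂ) (j : Fin n) :
    EuclideanSpace ℂ (Fin m) :=
  WithLp.toLp 2 (fun p => A p j)

/-!
In the orthonormal basis formed by the columns of `Q`, the coordinates of `A(:,q)` are `R(:,q)`.
Triangularity with an invertible diagonal makes the pivot columns of `A` span the same subspace as
the first `i - 1` basis vectors, so projecting onto its orthogonal complement just deletes the first
`i - 1` coordinates.
-/

section Triangular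

open Submodule

variable {R M : Type*} [Ring R] [AddCommGroup M] [Module R M]

open Set in
theorem span_range_eq_of_triangular {κ : Type*} [Preorder κ] [WellFoundedLT κ] {u v : κ → M}
    {c : κ → R} (hc : ∀ r, IsUnit (c r))
    (hv : ∀ r, v r - c r • u r ∈ span R (u '' Iio r)) :
    span R (range v) = span R (range u) := by
  apply le_antisymm <;> rw [span_le, range_subset_iff] <;> intro r
  · have hu : c r • u r ∈ span R (range u) := smul_mem _ _ (subset_span (mem_range_self r))
    exact (sub_mem_iff_left _ hu).1 (span_mono (image_subset_range u _) (hv r))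
  · induction r using WellFoundedLT.induction with
    | ind r ih =>
      have hlower : span R (u '' Iio r) ≤ span R (range v) :=
        span_le.2 (image_subset_iff.2 ih)
      have hcu : c r • u r ∈ span R (range v) :=
        (sub_mem_iff_right _ (subset_span (mem_range_self r))).1 (hlower (hv r))
      exact (smul_mem_iff_of_isUnit _ (hc r)).1 hcu

theorem span_image_lt_eq_of_upperTriangular {m n k : ℕ} (hkm : k ≤ m) (hkn : k ≤ n)
    {u : Fin m → M} {v : Fin n → M} {T : Matrix (Fin m) (Fin n) R}
    (hv : ∀ q, v q = ∑ p, T p q • u p)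
    (htri : ∀ p q, q.val < k → q.val < p.val → T p q = 0)
    (hdiag : ∀ r : Fin k, IsUnit (T (r.castLE hkm) (r.castLE hkn))) :
    span R (v '' {q | q.val < k}) = span R (u '' {p | p.val < k}) := by
  rw [← Fin.range_castLE hkn, ← Fin.range_castLE hkm, ← Set.range_comp, ← Set.range_comp]
  refine span_range_eq_of_triangular hdiag fun r ↦ ?_
  rw [Function.comp_apply, Function.comp_apply, hv,
    ← Finset.sum_erase_eq_sub (Finset.mem_univ (r.castLE hkm))]
  refine sum_mem fun p hp ↦ ?_
  rcases (Finset.ne_of_mem_erase hp).lt_or_gt with hpr | hrp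
  · exact smul_mem _ _ (subset_span ⟨⟨p.val, lt_trans hpr r.isLt⟩, hpr, rfl⟩)
  · rw [htri p _ r.isLt hrp, zero_smul]
    exact zero_mem _

end Triangular

section InnerProductSpace

open Submodule

variable {𝕜 E ι : Type*} [RCLike 𝕜] [NormedAddCommGroup E] [InnerProductSpace 𝕜 E] [Fintype ι]

theorem inner_starProjection_orthogonal_span_image (b : OrthonormalBasis ι 𝕜 E) (s : Set ι)
    [DecidablePred (· ∈ s)] [(span 𝕜 (b '' s)).HasOrthogonalProjection] (p : ι) (x : E) :
    inner 𝕜 (b p) ((span 𝕜 (b '' s))ᗮ.starProjection x) =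
      if p ∈ s then 0 else inner 𝕜 (b p) x := by
  split_ifs with hp
  · exact inner_right_of_mem_orthogonal (subset_span (Set.mem_image_of_mem b hp))
      (starProjection_apply_mem _ x)
  · have hbp : b p ∈ (span 𝕜 (b '' s))ᗮ := by
      rw [← span_singleton_le_iff_mem, ← isOrtho_iff_le, isOrtho_span]
      rintro _ rfl _ ⟨q, hq, rfl⟩
      exact b.inner_eq_zero (ne_of_mem_of_not_mem hq hp).symm
    rw [← inner_starProjection_left_eq_right, starProjection_eq_self_iff.2 hbp]

theorem norm_starProjection_orthogonal_span_image (b : OrthonormalBasis ι 𝕜 E) (s : Set ι)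
    [DecidablePred (· ∈ s)] [(span 𝕜 (b '' s)).HasOrthogonalProjection] (x : E) :
    ‖(span 𝕜 (b '' s))ᗮ.starProjection x‖ =
      √(∑ p, if p ∈ s then 0 else ‖inner 𝕜 (b p) x‖ ^ 2) := by
  rw [← Real.sqrt_sq (norm_nonneg _), ← b.sum_sq_norm_inner_right]
  congr! 2 with p
  rw [inner_starProjection_orthogonal_span_image]
  split_ifs <;> simp

theorem residual_norm_eq_tailNorm_general {m n k : ℕ} (hkm : k ≤ m) (hkn : k ≤ n)
    (b : OrthonormalBasis (Fin m) 𝕜 E) (a : Fin n → E)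
    [(span 𝕜 (a '' {q | q.val < k})).HasOrthogonalProjection]
    (htri : ∀ p q, q.val < k → q.val < p.val → inner 𝕜 (b p) (a q) = 0)
    (hdiag : ∀ r : Fin k, inner 𝕜 (b (r.castLE hkm)) (a (r.castLE hkn)) ≠ 0) (x : E) :
    ‖(span 𝕜 (a '' {q | q.val < k}))ᗮ.starProjection x‖ =
      √(∑ p, if k ≤ p.val then ‖inner 𝕜 (b p) x‖ ^ 2 else 0) := by
  have hspan : span 𝕜 (a '' {q | q.val < k}) = span 𝕜 (b '' {p | p.val < k}) :=
    span_image_lt_eq_of_upperTriangular (T := .of fun p q ↦ inner 𝕜 (b p) (a q)) hkm hkn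
      (fun q ↦ (b.sum_repr' (a q)).symm) htri fun r ↦ (hdiag r).isUnit
  have : (span 𝕜 (b '' {p | p.val < k})).HasOrthogonalProjection := hspan ▸ ‹_›
  simp only [hspan, norm_starProjection_orthogonal_span_image, Set.mem_ofPred_eq]
  simp only [← not_le, ite_not]

end InnerProductSpace

theorem inner_colE_colE {l m n : ℕ} (A : Matrix (Fin m) (Fin l) ℂ) (B : Matrix (Fin m) (Fin n) ℂ)
    (p : Fin l) (q : Fin n) : inner ℂ (colE A p) (colE B q) = (Aᴴ * B) p q := by
  simp [colE, PiLp.inner_apply, Matrix.mul_apply, mul_comm]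

theorem orthonormal_colE {m : ℕ} {Q : Matrix (Fin m) (Fin m) ℂ}
    (hQ : Q ∈ Matrix.unitaryGroup (Fin m) ℂ) : Orthonormal ℂ (colE Q) := by
  have hQQ : Qᴴ * Q = 1 := Matrix.mem_unitaryGroup_iff'.1 hQ
  simp only [orthonormal_iff_ite, inner_colE_colE, hQQ, Matrix.one_apply, implies_true]

theorem exists_orthonormalBasis_coe_eq_colE {m : ℕ} {Q : Matrix (Fin m) (Fin m) ℂ}
    (hQ : Q ∈ Matrix.unitaryGroup (Fin m) ℂ) :
    ∃ b : OrthonormalBasis (Fin m) ℂ (EuclideanSpace ℂ (Fin m)), ⇑b = colE Q := by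
  have hspan : Submodule.span ℂ (Set.range (colE Q)) = ⊤ :=
    (orthonormal_colE hQ).linearIndependent.span_eq_top_of_card_eq_finrank' (by simp)
  exact ⟨.mk (orthonormal_colE hQ) hspan.ge, OrthonormalBasis.coe_mk _ _⟩

/-- Let `R = Qᴴ A` with `Q` unitary, and suppose the first `i−1` columns of `R`
are upper-triangular with nonzero diagonal entries. Then for every column `j`, the norm of the
orthogonal projection of `A(:,j)` onto the orthogonal complement of
`span{A(:,1), …, A(:,i−1)}` equals `‖R(i:m, j)‖₂`. -/
theorem residual_norm_eq_tailNorm {m n : ℕ} (A : Matrix (Fin m) (Fin n) ℂ)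
    (Q : Matrix (Fin m) (Fin m) ℂ) (hQ : Q ∈ Matrix.unitaryGroup (Fin m) ℂ)
    (R : Matrix (Fin m) (Fin n) ℂ) (hR : R = Qᴴ * A)
    (i : ℕ) (hi1 : 1 ≤ i) (him : i ≤ m) (hin : i - 1 ≤ n)
    (htri : ∀ (p : Fin m) (q : Fin n), q.val + 1 < i → q.val < p.val → R p q = 0)
    (hdiag : ∀ (r : ℕ) (hr : r + 1 < i) (hrn : r < n), R ⟨r, by omega⟩ ⟨r, hrn⟩ ≠ 0) :
    ∀ j : Fin n,
      ‖(Submodule.orthogonalProjectionOnto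
          (Submodule.span ℂ {v : EuclideanSpace ℂ (Fin m) |
              ∃ q : Fin n, q.val + 1 < i ∧ v = colE A q})ᗮ
          (colE A j) : EuclideanSpace ℂ (Fin m))‖ = tailNorm R (i - 1) j := by
  intro j
  obtain ⟨b, hb⟩ := exists_orthonormalBasis_coe_eq_colE hQ
  have hinner (p : Fin m) (q : Fin n) : inner ℂ (b p) (colE A q) = R p q := by
    rw [hb, inner_colE_colE, hR]
  simpa [hinner, tailNorm, Set.image, eq_comm, Nat.lt_sub_iff_add_lt] using
    residual_norm_eq_tailNorm_general (by omega) hin b (colE A)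
      (fun p q hq ↦ hinner p q ▸ htri p q (by omega))
      (fun r ↦ hinner _ _ ▸ hdiag r (by omega) (by omega)) (colE A j)
end
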